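/- Let d ≥ 1, let r be a real number with 0 ≤ r < 1, and let μ be a locally constant distribution on ℤ_p^d with growth bounded by r, i.e. there exists C ∈ ℝ such that v_p(μ(1_{a + p^m ℤ_p^d})) ≥ C − r·m for all integers m ≥ 0 and all a ∈ ℤ_p^d. Then there exists a unique continuous E-linear functional μ̃ : C^r(ℤ_p^d, E) → E whose restriction to LC(ℤ_p^d, E) equals μ. -/

import Mathlib

open Filter Topology

/-- `p^{-ε_m(f)}`: the supremum of `‖f (x+y) - f x‖` over `x ∈ ℤ_p^d`, `y ∈ p^m ℤ_p^d`. -/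
noncomputable def supDiff {p : ℕ} [Fact p.Prime] (E : Type*) [NormedField E] {d : ℕ}
    (f : (Fin d → ℤ_[p]) → E) (m : ℕ) : ℝ :=
  ⨆ x : Fin d → ℤ_[p], ⨆ z : Fin d → ℤ_[p], ‖f (x + (p : ℤ_[p]) ^ m • z) - f x‖

/-- `f ∈ C^r(ℤ_p^d, E)`. -/
def MemCr {p : ℕ} [Fact p.Prime] (E : Type*) [NormedField E] {d : ℕ} (r : ℝ)
    (f : (Fin d → ℤ_[p]) → E) : Prop :=
  Continuous f ∧
    Tendsto (fun m : ℕ => supDiff E f m * (p : ℝ) ^ (r * (m : ℝ))) atTop (nhds 0)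

/-- The norm `‖f‖_{C^r} = p^{-v_{C^r}(f)}`. -/
noncomputable def CrNorm {p : ℕ} [Fact p.Prime] (E : Type*) [NormedField E] {d : ℕ} (r : ℝ)
    (f : (Fin d → ℤ_[p]) → E) : ℝ :=
  max (⨆ x : Fin d → ℤ_[p], ‖f x‖) (⨆ m : ℕ, supDiff E f m * (p : ℝ) ^ (r * (m : ℝ)))

/-- `Φ` is a continuous `E`-linear functional on `C^r(ℤ_p^d, E)` extending the locally
constant distribution `μ`. -/
def IsCrExtension {p : ℕ} [Fact p.Prime] (E : Type*) [NormedField E] {d : ℕ} (r : ℝ)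
    (μ : LocallyConstant (Fin d → ℤ_[p]) E →ₗ[E] E) (Φ : ((Fin d → ℤ_[p]) → E) → E) : Prop :=
  (∀ g : LocallyConstant (Fin d → ℤ_[p]) E, Φ ⇑g = μ g) ∧
  (∀ f g : (Fin d → ℤ_[p]) → E, MemCr E r f → MemCr E r g → Φ (f + g) = Φ f + Φ g) ∧
  (∀ (c : E) (f : (Fin d → ℤ_[p]) → E), MemCr E r f → Φ (c • f) = c • Φ f) ∧
  (∃ K : ℝ, ∀ f : (Fin d → ℤ_[p]) → E, MemCr E r f → ‖Φ f‖ ≤ K * CrNorm E r f)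

section aux

variable {p : ℕ} [Fact p.Prime] {E : Type*} [NormedField E] {d : ℕ}

/-- Reduction modulo `p^m`. -/
noncomputable def qq (m : ℕ) (x : Fin d → ℤ_[p]) : Fin d → ZMod (p ^ m) :=
  fun i => PadicInt.toZModPow m (x i)

/-- A section of the reduction. -/
noncomputable def ss (m : ℕ) (c : Fin d → ZMod (p ^ m)) : Fin d → ℤ_[p] :=
  fun i => ((c i).val : ℤ_[p])

theorem qq_ss (m : ℕ) (c : Fin d → ZMod (p ^ m)) : qq (p := p) m (ss m c) = c := by
  funext i
  have : NeZero (p ^ m) := ⟨pow_ne_zero _ (Fact.out : p.Prime).ne_zero⟩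
  simp [qq, ss]

theorem toZ_eq_iff (m : ℕ) (x y : ℤ_[p]) :
    PadicInt.toZModPow m x = PadicInt.toZModPow m y ↔ x - y ∈ Ideal.span {(p : ℤ_[p]) ^ m} := by
  rw [← PadicInt.ker_toZModPow, RingHom.mem_ker, map_sub, sub_eq_zero]

theorem qq_eq_iff (m : ℕ) (x y : Fin d → ℤ_[p]) :
    qq m x = qq m y ↔ ∃ z : Fin d → ℤ_[p], x = y + (p : ℤ_[p]) ^ m • z := by
  constructor
  · intro h
    have h1 : ∀ i, ∃ a, a * (p : ℤ_[p]) ^ m = x i - y i := fun i =>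
      Ideal.mem_span_singleton'.1 ((toZ_eq_iff m _ _).1 (congrFun h i))
    choose z hz using h1
    refine ⟨z, funext fun i => ?_⟩
    have := hz i
    simp only [Pi.add_apply, Pi.smul_apply, smul_eq_mul]
    linear_combination -this
  · rintro ⟨z, rfl⟩
    funext i
    refine (toZ_eq_iff m _ _).2 (Ideal.mem_span_singleton'.2 ⟨z i, ?_⟩)
    simp only [Pi.add_apply, Pi.smul_apply, smul_eq_mul]
    ring

theorem qq_eq_iff_dist (m : ℕ) (x y : Fin d → ℤ_[p]) :
    qq m x = qq m y ↔ dist x y ≤ (p : ℝ) ^ (-(m : ℤ)) := by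
  have hp : (0 : ℝ) < p := by exact_mod_cast (Fact.out : p.Prime).pos
  rw [dist_pi_le_iff (by positivity), funext_iff]
  refine forall_congr' fun i => ?_
  rw [dist_eq_norm, PadicInt.norm_le_pow_iff_mem_span_pow]
  exact toZ_eq_iff m _ _

theorem qq_mono {m n : ℕ} (h : m ≤ n) {x y : Fin d → ℤ_[p]} (hxy : qq n x = qq n y) :
    qq m x = qq m y := by
  rw [qq_eq_iff_dist] at *
  refine hxy.trans ?_
  have hp : (1 : ℝ) ≤ p := by exact_mod_cast (Fact.out : p.Prime).one_lt.le
  exact zpow_le_zpow_right₀ hp (by omega)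

theorem qq_lc (m : ℕ) : IsLocallyConstant (qq (p := p) (d := d) m) := by
  rw [IsLocallyConstant.iff_eventually_eq]
  intro x
  have hp : (0 : ℝ) < p := by exact_mod_cast (Fact.out : p.Prime).pos
  filter_upwards [Metric.ball_mem_nhds x (show (0:ℝ) < (p : ℝ) ^ (-(m : ℤ)) by positivity)] with y hy
  rw [qq_eq_iff_dist]
  exact (Metric.mem_ball.1 hy).le

/-- The locally constant function attached to a function on the quotient. -/
noncomputable def LL (m : ℕ) (g : (Fin d → ZMod (p ^ m)) → E) :
    LocallyConstant (Fin d → ℤ_[p]) E :=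
  ⟨fun x => g (qq m x), (qq_lc m).comp g⟩

theorem LL_apply (m : ℕ) (g : (Fin d → ZMod (p ^ m)) → E) (x : Fin d → ℤ_[p]) :
    LL m g x = g (qq m x) := rfl

/-- The level `m` approximation of `f`. -/
noncomputable def TT (m : ℕ) (f : (Fin d → ℤ_[p]) → E) : LocallyConstant (Fin d → ℤ_[p]) E :=
  LL m (fun c => f (ss m c))

theorem TT_apply (m : ℕ) (f : (Fin d → ℤ_[p]) → E) (x : Fin d → ℤ_[p]) :
    TT m f x = f (ss m (qq m x)) := rfl

theorem TT_add (m : ℕ) (f g : (Fin d → ℤ_[p]) → E) : TT m (f + g) = TT m f + TT m g := by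
  ext x; rfl

theorem TT_smul (m : ℕ) (c : E) (f : (Fin d → ℤ_[p]) → E) : TT m (c • f) = c • TT m f := by
  ext x; rfl

theorem TT_succ (m : ℕ) (f : (Fin d → ℤ_[p]) → E) :
    TT (m + 1) f - TT m f = LL (m + 1) (fun c => f (ss (m + 1) c) - f (ss m (qq m (ss (m + 1) c)))) := by
  ext x
  rw [LocallyConstant.coe_sub, Pi.sub_apply, TT_apply, TT_apply, LL_apply]
  rw [qq_mono (Nat.le_succ m) (qq_ss (m + 1) (qq (m + 1) x))]

theorem LL_bound [IsUltrametricDist E] (μ : LocallyConstant (Fin d → ℤ_[p]) E →ₗ[E] E) (m : ℕ) (A : ℝ)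
    (hA : ∀ (a : Fin d → ℤ_[p]) (g : LocallyConstant (Fin d → ℤ_[p]) E),
      ⇑g = Set.indicator
          {x : Fin d → ℤ_[p] | ∃ z : Fin d → ℤ_[p], x = a + (p : ℤ_[p]) ^ m • z}
          (fun _ => (1 : E)) → ‖μ g‖ ≤ A)
    (g : (Fin d → ZMod (p ^ m)) → E) (B : ℝ) (hB : ∀ c, ‖g c‖ ≤ B) :
    ‖μ (LL m g)‖ ≤ B * A := by
  classical
  have : NeZero (p ^ m) := ⟨pow_ne_zero _ (Fact.out : p.Prime).ne_zero⟩
  have hB0 : 0 ≤ B := (norm_nonneg _).trans (hB (fun _ => 0))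
  have hs : LL m g = ∑ c, g c • LL (p := p) m (fun c' => if c' = c then (1 : E) else 0) := by
    ext x
    have : ∀ (s : Finset (Fin d → ZMod (p ^ m))), (∑ c ∈ s, g c • LL (p := p) m (fun c' => if c' = c then (1 : E) else 0)) x
      = ∑ c ∈ s, g c * (if qq m x = c then (1 : E) else 0) := by
      intro s
      induction s using Finset.induction_on with
      | empty => simp
      | insert a s ha ih =>
        rw [Finset.sum_insert ha, Finset.sum_insert ha, LocallyConstant.coe_add, Pi.add_apply, ih]
        rfl
    rw [this]
    simp [LL_apply]
  rw [hs, map_sum]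
  have hA' : ∀ c, ‖μ (LL (p := p) m (fun c' => if c' = c then (1 : E) else 0))‖ ≤ A := by
    intro c
    apply hA (ss m c)
    funext x
    rw [LL_apply, Set.indicator_apply]
    refine if_congr ?_ rfl rfl
    rw [Set.mem_ofPred_eq, ← qq_eq_iff, qq_ss]
  have hA0 : 0 ≤ A := (norm_nonneg _).trans (hA' (fun _ => 0))
  refine IsUltrametricDist.norm_sum_le_of_forall_le_of_nonneg (by positivity) fun c _ => ?_
  rw [map_smul, norm_smul]
  exact mul_le_mul (hB c) (hA' c) (norm_nonneg _) hB0

theorem cont_bdd {f : (Fin d → ℤ_[p]) → E} (hf : Continuous f) : ∃ B, ∀ x, ‖f x‖ ≤ B := by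
  obtain ⟨B, hB⟩ := isCompact_univ.exists_bound_of_continuousOn hf.continuousOn
  exact ⟨B, fun x => hB x (Set.mem_univ x)⟩

theorem le_supDiff {f : (Fin d → ℤ_[p]) → E} (hf : Continuous f) (m : ℕ) {x y : Fin d → ℤ_[p]}
    (h : qq m x = qq m y) : ‖f x - f y‖ ≤ supDiff E f m := by
  obtain ⟨B, hB⟩ := cont_bdd hf
  obtain ⟨z, rfl⟩ := (qq_eq_iff m x y).1 h
  have h2 : ∀ a z : Fin d → ℤ_[p], ‖f (a + (p : ℤ_[p]) ^ m • z) - f a‖ ≤ B + B := fun a z =>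
    (norm_sub_le _ _).trans (add_le_add (hB _) (hB _))
  unfold supDiff
  refine le_trans (le_ciSup (f := fun z => ‖f (y + (p : ℤ_[p]) ^ m • z) - f y‖) ⟨B + B, ?_⟩ z) ?_
  · rintro _ ⟨z, rfl⟩
    exact h2 _ _
  · refine le_ciSup (f := fun y => ⨆ z, ‖f (y + (p : ℤ_[p]) ^ m • z) - f y‖) ⟨B + B, ?_⟩ y
    rintro _ ⟨a, rfl⟩
    exact ciSup_le fun z => h2 _ _

theorem supDiff_nonneg (f : (Fin d → ℤ_[p]) → E) (m : ℕ) : 0 ≤ supDiff E f m :=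
  Real.iSup_nonneg fun _ => Real.iSup_nonneg fun _ => norm_nonneg _

theorem supDiff_le {f : (Fin d → ℤ_[p]) → E} {m : ℕ} {B : ℝ}
    (h : ∀ x y, qq m x = qq m y → ‖f x - f y‖ ≤ B) : supDiff E f m ≤ B :=
  ciSup_le fun x => ciSup_le fun z => h _ _ ((qq_eq_iff m _ _).2 ⟨z, rfl⟩)

theorem lc_uniform (g : LocallyConstant (Fin d → ℤ_[p]) E) :
    ∃ N, ∀ m, N ≤ m → ∀ x y, qq m x = qq m y → g x = g y := by
  obtain ⟨δ, hδ, h⟩ := lebesgue_number_lemma_of_metric (isCompact_univ (X := Fin d → ℤ_[p]))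
    (c := fun e : E => {x | g x = e}) (fun e => g.isLocallyConstant.isOpen_fiber e)
    (fun x _ => Set.mem_iUnion.2 ⟨g x, rfl⟩)
  have hp : (1 : ℝ) < p := by exact_mod_cast (Fact.out : p.Prime).one_lt
  obtain ⟨N, hN⟩ := exists_pow_lt_of_lt_one hδ (inv_lt_one_of_one_lt₀ hp)
  refine ⟨N, fun m hm x y hxy => ?_⟩
  have hd := (qq_eq_iff_dist N _ _).1 (qq_mono hm hxy)
  rw [zpow_neg, zpow_natCast, ← inv_pow] at hd
  obtain ⟨e, he⟩ := h y (Set.mem_univ _)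
  have h1 : g x = e := he (Metric.mem_ball.2 (hd.trans_lt hN))
  have h2 : g y = e := he (Metric.mem_ball_self hδ)
  rw [h1, h2]

theorem TT_lc (g : LocallyConstant (Fin d → ℤ_[p]) E) : ∀ᶠ m in atTop, TT m ⇑g = g := by
  obtain ⟨N, hN⟩ := lc_uniform g
  filter_upwards [eventually_ge_atTop N] with m hm
  ext x
  rw [TT_apply]
  exact hN m hm _ _ (qq_ss _ _)

theorem memCr_lc (r : ℝ) (g : LocallyConstant (Fin d → ℤ_[p]) E) : MemCr E r ⇑g := by
  refine ⟨g.continuous, ?_⟩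
  obtain ⟨N, hN⟩ := lc_uniform g
  refine tendsto_const_nhds.congr' ?_
  filter_upwards [eventually_ge_atTop N] with m hm
  have : supDiff E (⇑g) m = 0 := le_antisymm
    (supDiff_le fun x y h => by rw [hN m hm x y h]; simp) (supDiff_nonneg _ _)
  simp [this]

theorem memCr_sub [IsUltrametricDist E] {r : ℝ} {f g : (Fin d → ℤ_[p]) → E} (hf : MemCr E r f) (hg : MemCr E r g) :
    MemCr E r (f + (-1 : E) • g) := by
  have hp : (0 : ℝ) < p := by exact_mod_cast (Fact.out : p.Prime).pos
  refine ⟨hf.1.add (hg.1.const_smul _), ?_⟩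
  have h := hf.2.add hg.2
  rw [add_zero] at h
  refine squeeze_zero (fun m => mul_nonneg (supDiff_nonneg _ _) (by positivity)) (fun m => ?_) h
  rw [← add_mul]
  refine mul_le_mul_of_nonneg_right (supDiff_le fun x y hxy => ?_) (by positivity)
  have e : (f + (-1 : E) • g) x - (f + (-1 : E) • g) y = (f x - f y) - (g x - g y) := by
    simp only [Pi.add_apply, Pi.smul_apply, smul_eq_mul]; ring
  rw [e]
  exact (norm_sub_le _ _).trans (add_le_add (le_supDiff hf.1 m hxy) (le_supDiff hg.1 m hxy))

theorem norm_le_CrNorm {r : ℝ} {f : (Fin d → ℤ_[p]) → E} (hf : MemCr E r f) (x : Fin d → ℤ_[p]) :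
    ‖f x‖ ≤ CrNorm E r f := by
  obtain ⟨B, hB⟩ := cont_bdd hf.1
  refine le_max_of_le_left (le_ciSup (f := fun x => ‖f x‖) ⟨B, ?_⟩ x)
  rintro _ ⟨x, rfl⟩
  exact hB x

theorem supDiff_le_CrNorm {r : ℝ} {f : (Fin d → ℤ_[p]) → E} (hf : MemCr E r f) (m : ℕ) :
    supDiff E f m * (p : ℝ) ^ (r * (m : ℝ)) ≤ CrNorm E r f :=
  le_max_of_le_right (le_ciSup (f := fun m : ℕ => supDiff E f m * (p : ℝ) ^ (r * (m : ℝ)))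
    hf.2.bddAbove_range m)

theorem CrNorm_approx [IsUltrametricDist E] {r : ℝ} (hr0 : 0 ≤ r) {f : (Fin d → ℤ_[p]) → E} (hf : MemCr E r f)
    (m : ℕ) {ε : ℝ} (hε : ∀ n, m ≤ n → supDiff E f n * (p : ℝ) ^ (r * (n : ℝ)) ≤ ε) :
    CrNorm E r (f + (-1 : E) • ⇑(TT m f)) ≤ ε := by
  have hp : (1 : ℝ) ≤ p := by exact_mod_cast (Fact.out : p.Prime).one_lt.le
  have hp0 : (0 : ℝ) < p := by linarith
  have hx : ∀ x, (f + (-1 : E) • ⇑(TT m f)) x = f x - f (ss m (qq m x)) := by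
    intro x
    simp only [Pi.add_apply, Pi.smul_apply, smul_eq_mul, TT_apply]; ring
  have h1 : ∀ x, ‖(f + (-1 : E) • ⇑(TT m f)) x‖ ≤ supDiff E f m := by
    intro x
    rw [hx]
    exact le_supDiff hf.1 m (qq_ss _ _).symm
  refine max_le (ciSup_le fun x => (h1 x).trans ?_) (ciSup_le fun n => ?_)
  · refine le_trans ?_ (hε m le_rfl)
    exact le_mul_of_one_le_right (supDiff_nonneg _ _) (Real.one_le_rpow hp (by positivity))
  · rcases le_total m n with hmn | hmn
    · refine le_trans (mul_le_mul_of_nonneg_right (supDiff_le fun x y hxy => ?_) (by positivity))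
        (hε n hmn)
      rw [hx, hx, qq_mono hmn hxy, sub_sub_sub_cancel_right]
      exact le_supDiff hf.1 n hxy
    · refine le_trans (mul_le_mul (supDiff_le fun x y hxy => ?_)
        (Real.rpow_le_rpow_of_exponent_le hp (mul_le_mul_of_nonneg_left (Nat.cast_le.2 hmn) hr0))
        (by positivity) (supDiff_nonneg _ _)) (hε m le_rfl)
      rw [sub_eq_add_neg]
      refine (IsUltrametricDist.norm_add_le_max _ _).trans (max_le (h1 x) ?_)
      rw [norm_neg]
      exact h1 y

end aux

/-- For `d ≥ 1`, `0 ≤ r < 1` and a locally constant distribution `μ` on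
`ℤ_p^d` with growth bounded by `r` (i.e. `‖μ(1_{a + p^m ℤ_p^d})‖ ≤ p^{r·m - C}` for some `C`),
there is a unique continuous `E`-linear functional on `C^r(ℤ_p^d, E)` extending `μ`. -/
theorem stmt5 (p : ℕ) [Fact p.Prime] (E : Type*) [NormedField E] [CompleteSpace E]
    [IsUltrametricDist E] [Algebra ℚ_[p] E] [FiniteDimensional ℚ_[p] E]
    (hE : ∀ x : ℚ_[p], ‖algebraMap ℚ_[p] E x‖ = ‖x‖)
    (d : ℕ) (hd : 1 ≤ d) (r : ℝ) (hr0 : 0 ≤ r) (hr1 : r < 1)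
    (μ : LocallyConstant (Fin d → ℤ_[p]) E →ₗ[E] E)
    (C : ℝ)
    (hgrowth : ∀ (m : ℕ) (a : Fin d → ℤ_[p]) (g : LocallyConstant (Fin d → ℤ_[p]) E),
      ⇑g = Set.indicator
          {x : Fin d → ℤ_[p] | ∃ z : Fin d → ℤ_[p], x = a + (p : ℤ_[p]) ^ m • z}
          (fun _ => (1 : E)) →
      ‖μ g‖ ≤ (p : ℝ) ^ (r * (m : ℝ) - C)) :
    ∃ Φ : ((Fin d → ℤ_[p]) → E) → E, IsCrExtension E r μ Φ ∧
      ∀ Φ' : ((Fin d → ℤ_[p]) → E) → E, IsCrExtension E r μ Φ' →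
        ∀ f : (Fin d → ℤ_[p]) → E, MemCr E r f → Φ' f = Φ f := by
  have hp : (1 : ℝ) < p := by exact_mod_cast (Fact.out : p.Prime).one_lt
  have hp0 : (0 : ℝ) < p := by linarith
  have hbd : ∀ (m : ℕ) (g : (Fin d → ZMod (p ^ m)) → E) (B : ℝ), (∀ c, ‖g c‖ ≤ B) →
      ‖μ (LL m g)‖ ≤ B * (p : ℝ) ^ (r * (m : ℝ) - C) := fun m g B hB =>
    LL_bound μ m _ (hgrowth m) g B hB
  have hstep : ∀ (f : (Fin d → ℤ_[p]) → E), MemCr E r f → ∀ m : ℕ,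
      ‖μ (TT (m + 1) f) - μ (TT m f)‖ ≤
        supDiff E f m * (p : ℝ) ^ (r * (m : ℝ)) * (p : ℝ) ^ (r - C) := by
    intro f hf m
    rw [← map_sub, TT_succ]
    refine (hbd _ _ (supDiff E f m) fun c => le_supDiff hf.1 m (qq_ss _ _).symm).trans ?_
    rw [mul_assoc, ← Real.rpow_add hp0]
    apply le_of_eq
    congr 2
    push_cast
    ring
  have hlim : ∀ (f : (Fin d → ℤ_[p]) → E), MemCr E r f →
      ∃ l, Tendsto (fun m => μ (TT m f)) atTop (nhds l) := by
    intro f hf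
    apply cauchySeq_tendsto_of_complete
    apply NonarchimedeanAddGroup.cauchySeq_of_tendsto_sub_nhds_zero
    refine squeeze_zero_norm (hstep f hf) ?_
    simpa using hf.2.mul_const ((p : ℝ) ^ (r - C))
  have hΦ : ∀ (f : (Fin d → ℤ_[p]) → E), MemCr E r f →
      Tendsto (fun m => μ (TT m f)) atTop (nhds (limUnder atTop (fun m => μ (TT m f)))) :=
    fun f hf => tendsto_nhds_limUnder (hlim f hf)
  refine ⟨fun f => limUnder atTop (fun m => μ (TT m f)), ⟨?_, ?_, ?_, ?_⟩, ?_⟩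
  · intro g
    refine Tendsto.limUnder_eq (tendsto_const_nhds.congr' ?_)
    filter_upwards [TT_lc g] with m hm
    rw [hm]
  · intro f g hf hg
    refine Tendsto.limUnder_eq (((hΦ f hf).add (hΦ g hg)).congr fun m => ?_)
    rw [TT_add, map_add]
  · intro c f hf
    refine Tendsto.limUnder_eq (((hΦ f hf).const_smul c).congr fun m => ?_)
    rw [TT_smul, map_smul]
  · refine ⟨(p : ℝ) ^ (r - C), fun f hf => ?_⟩
    refine le_of_tendsto (hΦ f hf).norm (Eventually.of_forall fun m => ?_)
    have hN0 : 0 ≤ CrNorm E r f := (norm_nonneg _).trans (norm_le_CrNorm hf 0)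
    induction m with
    | zero =>
      refine (hbd 0 _ (CrNorm E r f) fun c => norm_le_CrNorm hf _).trans ?_
      rw [mul_comm]
      refine mul_le_mul_of_nonneg_right (Real.rpow_le_rpow_of_exponent_le hp.le ?_) hN0
      simpa using hr0
    | succ m ih =>
      have e : μ (TT (m + 1) f) = (μ (TT (m + 1) f) - μ (TT m f)) + μ (TT m f) := by ring
      rw [e]
      refine (IsUltrametricDist.norm_add_le_max _ _).trans (max_le ((hstep f hf m).trans ?_) ih)
      rw [mul_comm]
      exact mul_le_mul_of_nonneg_left (supDiff_le_CrNorm hf m) (by positivity)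
  · rintro Φ' ⟨h1, h2, h3, K, hK⟩ f hf
    refine tendsto_nhds_unique (f := fun m => μ (TT m f)) (l := atTop) ?_ (hΦ f hf)
    rw [tendsto_iff_norm_sub_tendsto_zero]
    have hb : ∀ m, ‖μ (TT m f) - Φ' f‖ ≤ |K| * CrNorm E r (f + (-1 : E) • ⇑(TT m f)) := by
      intro m
      have hm := memCr_lc r (TT m f)
      have hs := memCr_sub hf hm
      have hneg : (-1 : E) • ⇑(TT m f) = ⇑((-1 : E) • TT m f) := rfl
      have e : Φ' (f + (-1 : E) • ⇑(TT m f)) = Φ' f - μ (TT m f) := by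
        rw [hneg, h2 _ _ hf (memCr_lc r _), h1, map_smul, smul_eq_mul]
        ring
      rw [norm_sub_rev, ← e]
      refine (hK _ hs).trans (mul_le_mul_of_nonneg_right (le_abs_self K) ?_)
      exact (norm_nonneg _).trans (norm_le_CrNorm hs 0)
    refine squeeze_zero (fun _ => norm_nonneg _) hb ?_
    have : Tendsto (fun m => CrNorm E r (f + (-1 : E) • ⇑(TT m f))) atTop (nhds 0) := by
      rw [Metric.tendsto_atTop]
      intro ε hε
      obtain ⟨N, hN⟩ := Metric.tendsto_atTop.1 hf.2 (ε / 2) (half_pos hε)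
      refine ⟨N, fun m hm => ?_⟩
      have h0 : 0 ≤ CrNorm E r (f + (-1 : E) • ⇑(TT m f)) :=
        (norm_nonneg _).trans (norm_le_CrNorm (memCr_sub hf (memCr_lc r _)) 0)
      rw [Real.dist_0_eq_abs, abs_of_nonneg h0]
      refine (CrNorm_approx hr0 hf m (ε := ε / 2) fun n hn => ?_).trans_lt (half_lt_self hε)
      have := hN n (hm.trans hn)
      rw [Real.dist_0_eq_abs] at this
      exact (le_abs_self _).trans this.le
    simpa using this.const_mul |K|
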